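/- Let S be a commutative semiring, G an S-semimodule, and L →f M →g N S-linear maps of S-semimodules. Consider the induced maps id_G ⊗ f : G⊗L → G⊗M and id_G ⊗ g : G⊗M → G⊗N. Then: (1) if g is surjective and normal, then id_G ⊗ g is surjective and normal; (2) if the sequence L →f M →g N → 0 is semi-exact with g surjective and normal, then G⊗L → G⊗M → G⊗N → 0 is semi-exact with id_G ⊗ g surjective and normal; (3) if L →f M →g N → 0 is exact with g surjective, and id_G ⊗ f is i-normal, then G⊗L → G⊗M → G⊗N → 0 is exact with id_G ⊗ g surjective. -/

import Mathlib

open TensorProduct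

section Defs

/-- An `S`-linear map `f` is *k-normal* if whenever `f m = f m'` there exist
`k, k' ∈ ker f` with `m + k = m' + k'`. -/
def KNormal {S : Type*} [Semiring S] {L M : Type*} [AddCommMonoid L] [AddCommMonoid M]
    [Module S L] [Module S M] (f : L →ₗ[S] M) : Prop :=
  ∀ m m' : L, f m = f m' → ∃ k k' : L, f k = 0 ∧ f k' = 0 ∧ m + k = m' + k'

/-- An `S`-linear map `f` is *i-normal* if whenever `m + f l = f l'` then `m` is in the
image of `f`. -/
def INormal {S : Type*} [Semiring S] {L M : Type*} [AddCommMonoid L] [AddCommMonoid M]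
    [Module S L] [Module S M] (f : L →ₗ[S] M) : Prop :=
  ∀ (m : M) (l l' : L), m + f l = f l' → ∃ x : L, f x = m

/-- An `S`-linear map is *normal* if it is both k-normal and i-normal. -/
def IsNormalMap {S : Type*} [Semiring S] {L M : Type*} [AddCommMonoid L] [AddCommMonoid M]
    [Module S L] [Module S M] (f : L →ₗ[S] M) : Prop :=
  KNormal f ∧ INormal f

/-- A sequence `L →f M →g N` is *exact* (in the sense of Abuhlail) if `g` is k-normal and
`f(L) = ker g`. -/
def IsExactSeq {S : Type*} [Semiring S] {L M N : Type*}
    [AddCommMonoid L] [AddCommMonoid M] [AddCommMonoid N]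
    [Module S L] [Module S M] [Module S N]
    (f : L →ₗ[S] M) (g : M →ₗ[S] N) : Prop :=
  KNormal g ∧ ∀ m : M, g m = 0 ↔ ∃ l : L, f l = m

/-- A sequence `L →f M →g N` is *semi-exact* if the subtractive closure of `f(L)`
equals `ker g`. -/
def IsSemiExactSeq {S : Type*} [Semiring S] {L M N : Type*}
    [AddCommMonoid L] [AddCommMonoid M] [AddCommMonoid N]
    [Module S L] [Module S M] [Module S N]
    (f : L →ₗ[S] M) (g : M →ₗ[S] N) : Prop :=
  ∀ m : M, g m = 0 ↔ ∃ l l' : L, m + f l = f l'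

/-- `0 → L →f M →g N → 0` is a *short exact sequence*: `f` is injective, `f(L) = ker g`,
and `g` is surjective and k-normal. -/
def IsShortExactSeq {S : Type*} [Semiring S] {L M N : Type*}
    [AddCommMonoid L] [AddCommMonoid M] [AddCommMonoid N]
    [Module S L] [Module S M] [Module S N]
    (f : L →ₗ[S] M) (g : M →ₗ[S] N) : Prop :=
  Function.Injective f ∧ (∀ m : M, g m = 0 ↔ ∃ l : L, f l = m) ∧
    Function.Surjective g ∧ KNormal g

/-- A subset `T` of an additive commutative monoid is *subtractive* if
`m + l ∈ T` and `l ∈ T` imply `m ∈ T`. -/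
def SubtractiveSet {M : Type*} [AddCommMonoid M] (T : Set M) : Prop :=
  ∀ m l : M, m + l ∈ T → l ∈ T → m ∈ T

/-- `F` is `M`-m-flat: for every submodule `L ≤ M`, `id_F ⊗ ι_L` is injective. -/
def MMFlat (S : Type*) [CommSemiring S] (F M : Type*) [AddCommMonoid F] [AddCommMonoid M]
    [Module S F] [Module S M] : Prop :=
  ∀ L : Submodule S M, Function.Injective (LinearMap.lTensor F L.subtype)

/-- `F` is `M`-i-flat: for every subtractive submodule `L ≤ M`, `id_F ⊗ ι_L` is injective. -/
def MIFlat (S : Type*) [CommSemiring S] (F M : Type*) [AddCommMonoid F] [AddCommMonoid M]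
    [Module S F] [Module S M] : Prop :=
  ∀ L : Submodule S M, SubtractiveSet (L : Set M) →
    Function.Injective (LinearMap.lTensor F L.subtype)

/-- `F` is `M`-e-flat (normally `M`-flat): for every subtractive submodule `L ≤ M`,
`id_F ⊗ ι_L` is injective with subtractive image. -/
def MEFlat (S : Type*) [CommSemiring S] (F M : Type*) [AddCommMonoid F] [AddCommMonoid M]
    [Module S F] [Module S M] : Prop :=
  ∀ L : Submodule S M, SubtractiveSet (L : Set M) →
    Function.Injective (LinearMap.lTensor F L.subtype) ∧
      SubtractiveSet (Set.range (LinearMap.lTensor F L.subtype))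

/-- `F` is *e-flat*: `F ⊗ -` preserves short exact sequences. -/
def EFlat (S : Type*) [CommSemiring S] (F : Type*) [AddCommMonoid F] [Module S F] : Prop :=
  ∀ (L M N : Type*) [AddCommMonoid L] [AddCommMonoid M] [AddCommMonoid N]
    [Module S L] [Module S M] [Module S N] (f : L →ₗ[S] M) (g : M →ₗ[S] N),
    IsShortExactSeq f g →
      IsShortExactSeq (LinearMap.lTensor F f) (LinearMap.lTensor F g)

/-- `F` is *m-flat*: `F` is `M`-m-flat for every `S`-semimodule `M`. -/
def MFlatAll (S : Type*) [CommSemiring S] (F : Type*) [AddCommMonoid F] [Module S F] : Prop :=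
  ∀ (M : Type*) [AddCommMonoid M] [Module S M] (L : Submodule S M),
    Function.Injective (LinearMap.lTensor F L.subtype)

/-- `A` is `S`-m-flat. -/
def SMFlat (S : Type*) [CommSemiring S] (A : Type*) [AddCommMonoid A] [Module S A] : Prop :=
  ∀ I : Submodule S S, Function.Injective (LinearMap.lTensor A I.subtype)

/-- `A` is `S`-i-flat. -/
def SIFlat (S : Type*) [CommSemiring S] (A : Type*) [AddCommMonoid A] [Module S A] : Prop :=
  ∀ I : Submodule S S, SubtractiveSet (I : Set S) →
    Function.Injective (LinearMap.lTensor A I.subtype)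

/-- `A` is `S`-e-flat. -/
def SEFlat (S : Type*) [CommSemiring S] (A : Type*) [AddCommMonoid A] [Module S A] : Prop :=
  ∀ I : Submodule S S, SubtractiveSet (I : Set S) →
    Function.Injective (LinearMap.lTensor A I.subtype) ∧
      SubtractiveSet (Set.range (LinearMap.lTensor A I.subtype))

/-- The canonical map `θ_I : A ⊗[S] I → A`, `a ⊗ i ↦ i • a`. -/
noncomputable def thetaI (S : Type*) [CommSemiring S] (A : Type*) [AddCommMonoid A] [Module S A]
    (I : Submodule S S) : TensorProduct S A I →ₗ[S] A :=
  (TensorProduct.rid S A).toLinearMap ∘ₗ LinearMap.lTensor A I.subtype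

end Defs

/-! A surjection `g` is k-normal and semi-exact after `f` precisely when `N` is the quotient of
`M` by the Bourne congruence `m ∼ m' ↔ ∃ l l', m + f l = m' + f l'`, that is, when `g` is a cokernel
of `f`. By the tensor-hom adjunction `G ⊗ -` preserves cokernels. For (1), a k-normal surjection is
a cokernel of the inclusion of its kernel; for (3), exactness is semi-exactness together with
k-normality of `g` and i-normality of `f`. -/

section Cokernel

variable {S L M N P : Type*} [Semiring S]
  [AddCommMonoid L] [AddCommMonoid M] [AddCommMonoid N] [AddCommMonoid P]
  [Module S L] [Module S M] [Module S N] [Module S P]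

theorem exists_linearMap_comp_eq_of_factorsThrough {g : M →ₗ[S] N} {h : M →ₗ[S] P}
    (hg : Function.Surjective g) (hh : Function.FactorsThrough h g) :
    ∃ k : N →ₗ[S] P, k ∘ₗ g = h := by
  have g_inv : ∀ n, g (Function.surjInv hg n) = n := Function.surjInv_eq hg
  refine ⟨{ toFun := fun n => h (Function.surjInv hg n), map_add' := ?_, map_smul' := ?_ }, ?_⟩
  · intro n n'
    rw [← map_add]
    exact hh (by simp only [map_add, g_inv])
  · intro s n
    rw [RingHom.id_apply, ← map_smul]
    exact hh (by simp only [map_smul, g_inv])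
  · ext m
    exact hh (g_inv (g m))

theorem map_eq_map_of_add_eq_add {f : L →ₗ[S] M} {h : M →ₗ[S] P} (hf : h ∘ₗ f = 0) {m m' : M}
    {l l' : L} (hl : m + f l = m' + f l') : h m = h m' := by
  have h_apply : ∀ l, h (f l) = 0 := LinearMap.congr_fun hf
  simpa only [map_add, h_apply, add_zero] using congrArg h hl

/-- `g` is a *cokernel* of `f` in the category of semimodules: it is surjective, and it identifies
exactly the elements congruent modulo the image of `f`. Without subtraction, congruence is expressed
by adding elements of the image on both sides. -/
structure IsCokernel (f : L →ₗ[S] M) (g : M →ₗ[S] N) : Prop where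
  surjective : Function.Surjective g
  map_eq_map_iff : ∀ m m' : M, g m = g m' ↔ ∃ l l' : L, m + f l = m' + f l'

/-- The *Bourne congruence* modulo the image of `f`, whose quotient is the cokernel of `f`. -/
def bourneCon (f : L →ₗ[S] M) : ModuleCon S M where
  r m m' := ∃ l l' : L, m + f l = m' + f l'
  iseqv :=
    { refl := fun _ => ⟨0, 0, rfl⟩
      symm := fun ⟨l, l', h⟩ => ⟨l', l, h.symm⟩
      trans := by
        rintro x y z ⟨a, b, hxy⟩ ⟨c, d, hyz⟩
        refine ⟨a + c, d + b, ?_⟩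
        rw [map_add, map_add, ← add_assoc, hxy, add_right_comm, hyz, add_assoc] }
  add' := by
    rintro w x y z ⟨a, b, hwx⟩ ⟨c, d, hyz⟩
    refine ⟨a + c, b + d, ?_⟩
    rw [map_add, map_add, add_add_add_comm, hwx, hyz, add_add_add_comm]
  smul s x y := by
    rintro ⟨a, b, hxy⟩
    refine ⟨s • a, s • b, ?_⟩
    rw [map_smul, map_smul, ← smul_add, hxy, smul_add]

/-- The projection of `M` onto its quotient by the Bourne congruence modulo the image of `f`. -/
def bourneProj (f : L →ₗ[S] M) : M →ₗ[S] (bourneCon f).Quotient where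
  __ := (bourneCon f).toAddCon.mk'
  map_smul' _ _ := rfl

theorem isCokernel_bourneProj (f : L →ₗ[S] M) : IsCokernel f (bourneProj f) where
  surjective := AddCon.mk'_surjective
  map_eq_map_iff _ _ := AddCon.eq (bourneCon f).toAddCon

variable {f : L →ₗ[S] M} {g : M →ₗ[S] N}

namespace IsCokernel

theorem comp_eq_zero (hfg : IsCokernel f g) : g ∘ₗ f = 0 := by
  ext l
  rw [LinearMap.comp_apply, LinearMap.zero_apply, ← map_zero g]
  exact (hfg.map_eq_map_iff _ _).2 ⟨0, l, by rw [map_zero, add_zero, zero_add]⟩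

theorem exists_comp_eq (hfg : IsCokernel f g) {h : M →ₗ[S] P} (hf : h ∘ₗ f = 0) :
    ∃ k : N →ₗ[S] P, k ∘ₗ g = h := by
  refine exists_linearMap_comp_eq_of_factorsThrough hfg.surjective fun m m' hm => ?_
  obtain ⟨l, l', hl⟩ := (hfg.map_eq_map_iff m m').1 hm
  exact map_eq_map_of_add_eq_add hf hl

end IsCokernel

end Cokernel

section Exactness

variable {S L M N : Type*} [Semiring S] [AddCommMonoid L] [AddCommMonoid M] [AddCommMonoid N]
  [Module S L] [Module S M] [Module S N] {f : L →ₗ[S] M} {g : M →ₗ[S] N}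

theorem INormal.of_surjective (hf : Function.Surjective f) : INormal f :=
  fun m _ _ _ => hf m

theorem IsSemiExactSeq.comp_eq_zero (hfg : IsSemiExactSeq f g) : g ∘ₗ f = 0 := by
  ext l
  exact (hfg (f l)).2 ⟨0, l, by rw [map_zero, add_zero]⟩

theorem isSemiExactSeq_ker_subtype (g : M →ₗ[S] N) :
    IsSemiExactSeq (LinearMap.ker g).subtype g := by
  refine fun m => ⟨fun hm => ⟨0, ⟨m, hm⟩, add_zero m⟩, ?_⟩
  rintro ⟨k, k', hk⟩
  simpa only [map_add, Submodule.subtype_apply, LinearMap.map_coe_ker, add_zero]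
    using congrArg g hk

theorem IsSemiExactSeq.map_eq_map_iff (hfg : IsSemiExactSeq f g) (hg : KNormal g) (m m' : M) :
    g m = g m' ↔ ∃ l l' : L, m + f l = m' + f l' := by
  constructor
  · intro hm
    obtain ⟨k, k', hk, hk', hmk⟩ := hg m m' hm
    obtain ⟨a, b, hab⟩ := (hfg k).1 hk
    obtain ⟨c, d, hcd⟩ := (hfg k').1 hk'
    refine ⟨b + c, d + a, ?_⟩
    calc
      m + f (b + c) = (m + k) + (f a + f c) := by rw [map_add, ← hab]; abel
      _ = (m' + k') + (f a + f c) := by rw [hmk]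
      _ = m' + f (d + a) := by rw [map_add, ← hcd]; abel
  · rintro ⟨l, l', hl⟩
    exact map_eq_map_of_add_eq_add hfg.comp_eq_zero hl

theorem IsCokernel.isSemiExactSeq (hfg : IsCokernel f g) : IsSemiExactSeq f g := by
  intro m
  simpa only [map_zero, zero_add] using hfg.map_eq_map_iff m 0

theorem IsCokernel.kNormal (hfg : IsCokernel f g) : KNormal g := by
  have g_apply : ∀ l, g (f l) = 0 := LinearMap.congr_fun hfg.comp_eq_zero
  intro m m' hm
  obtain ⟨l, l', hl⟩ := (hfg.map_eq_map_iff m m').1 hm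
  exact ⟨f l, f l', g_apply l, g_apply l', hl⟩

theorem isCokernel_iff :
    IsCokernel f g ↔ Function.Surjective g ∧ IsSemiExactSeq f g ∧ KNormal g :=
  ⟨fun hfg => ⟨hfg.surjective, hfg.isSemiExactSeq, hfg.kNormal⟩,
    fun ⟨hs, hfg, hg⟩ => ⟨hs, hfg.map_eq_map_iff hg⟩⟩

theorem isExactSeq_iff : IsExactSeq f g ↔ IsSemiExactSeq f g ∧ KNormal g ∧ INormal f := by
  constructor
  · rintro ⟨hg, hfg⟩
    have g_apply (l : L) : g (f l) = 0 := (hfg (f l)).2 ⟨l, rfl⟩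
    have ker_of_add (m : M) (l l' : L) (h : m + f l = f l') : g m = 0 := by
      simpa only [map_add, g_apply, add_zero] using congrArg g h
    refine ⟨fun m => ⟨fun hm => ?_, fun ⟨l, l', h⟩ => ker_of_add m l l' h⟩, hg,
      fun m l l' h => (hfg m).1 (ker_of_add m l l' h)⟩
    obtain ⟨l, rfl⟩ := (hfg m).1 hm
    exact ⟨0, l, by rw [map_zero, add_zero]⟩
  · rintro ⟨hfg, hg, hf⟩
    refine ⟨hg, fun m => ⟨fun hm => ?_, ?_⟩⟩
    · obtain ⟨l, l', h⟩ := (hfg m).1 hm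
      exact hf m l l' h
    · rintro ⟨l, rfl⟩
      exact LinearMap.congr_fun hfg.comp_eq_zero l

end Exactness

section LTensor

variable {S L M N P : Type*} (G : Type*) [CommSemiring S] [AddCommMonoid G]
  [AddCommMonoid L] [AddCommMonoid M] [AddCommMonoid N] [AddCommMonoid P]
  [Module S G] [Module S L] [Module S M] [Module S N] [Module S P]
  {f : L →ₗ[S] M} {g : M →ₗ[S] N}

namespace IsCokernel

theorem exists_comp_lTensor_eq (hfg : IsCokernel f g) {h : G ⊗[S] M →ₗ[S] P}
    (hf : h ∘ₗ f.lTensor G = 0) : ∃ k : G ⊗[S] N →ₗ[S] P, k ∘ₗ g.lTensor G = h := by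
  have curry_comp_eq_zero : (TensorProduct.curry h).flip ∘ₗ f = 0 := by
    ext l u
    exact LinearMap.congr_fun hf (u ⊗ₜ l)
  obtain ⟨k, hk⟩ := hfg.exists_comp_eq curry_comp_eq_zero
  refine ⟨TensorProduct.lift k.flip, TensorProduct.ext' fun u m => ?_⟩
  exact LinearMap.congr_fun (LinearMap.congr_fun hk m) u

theorem lTensor (hfg : IsCokernel f g) : IsCokernel (f.lTensor G) (g.lTensor G) := by
  refine ⟨LinearMap.lTensor_surjective G hfg.surjective, fun x y => ⟨fun hxy => ?_, ?_⟩⟩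
  · have hproj := isCokernel_bourneProj (f.lTensor G)
    obtain ⟨k, hk⟩ := hfg.exists_comp_lTensor_eq G hproj.comp_eq_zero
    apply (hproj.map_eq_map_iff x y).1
    rw [← hk, LinearMap.comp_apply, hxy, LinearMap.comp_apply]
  · have lTensor_comp : g.lTensor G ∘ₗ f.lTensor G = 0 := by
      rw [← LinearMap.lTensor_comp, hfg.comp_eq_zero, LinearMap.lTensor_zero]
    rintro ⟨a, b, hab⟩
    exact map_eq_map_of_add_eq_add lTensor_comp hab

end IsCokernel

theorem KNormal.lTensor (hg : KNormal g) (hs : Function.Surjective g) :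
    KNormal (g.lTensor G) :=
  ((isCokernel_iff.2 ⟨hs, isSemiExactSeq_ker_subtype g, hg⟩).lTensor G).kNormal

theorem IsNormalMap.lTensor (hg : IsNormalMap g) (hs : Function.Surjective g) :
    IsNormalMap (g.lTensor G) :=
  ⟨hg.1.lTensor G hs, .of_surjective (LinearMap.lTensor_surjective G hs)⟩

end LTensor

/-- right-exactness properties of the tensor functor `G ⊗ -`. -/
theorem stmt5 {S G L M N : Type*} [CommSemiring S]
    [AddCommMonoid G] [AddCommMonoid L] [AddCommMonoid M] [AddCommMonoid N]
    [Module S G] [Module S L] [Module S M] [Module S N]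
    (f : L →ₗ[S] M) (g : M →ₗ[S] N) :
    ((Function.Surjective g ∧ IsNormalMap g) →
        Function.Surjective (LinearMap.lTensor G g) ∧
          IsNormalMap (LinearMap.lTensor G g)) ∧
    ((IsSemiExactSeq f g ∧ Function.Surjective g ∧ IsNormalMap g) →
        IsSemiExactSeq (LinearMap.lTensor G f) (LinearMap.lTensor G g) ∧
          Function.Surjective (LinearMap.lTensor G g) ∧
          IsNormalMap (LinearMap.lTensor G g)) ∧
    ((IsExactSeq f g ∧ Function.Surjective g ∧ INormal (LinearMap.lTensor G f)) →
        IsExactSeq (LinearMap.lTensor G f) (LinearMap.lTensor G g) ∧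
          Function.Surjective (LinearMap.lTensor G g)) := by
  refine ⟨fun ⟨hs, hg⟩ => ⟨LinearMap.lTensor_surjective G hs, hg.lTensor G hs⟩, ?_, ?_⟩
  · rintro ⟨hfg, hs, hg⟩
    have coker := (isCokernel_iff.2 ⟨hs, hfg, hg.1⟩).lTensor G
    exact ⟨coker.isSemiExactSeq, coker.surjective, hg.lTensor G hs⟩
  · rintro ⟨hfg, hs, hGf⟩
    obtain ⟨hse, hg, -⟩ := isExactSeq_iff.1 hfg
    have coker := (isCokernel_iff.2 ⟨hs, hse, hg⟩).lTensor G
    exact ⟨isExactSeq_iff.2 ⟨coker.isSemiExactSeq, coker.kNormal, hGf⟩, coker.surjective⟩
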